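/- Let F be a face of the Gelfand–Cetlin polytope P_λ, where λ has block structure k. Then the graph φ(F) is a subgraph of the ladder diagram Γ_k; that is, every edge of φ(F) is an edge of Γ_k. -/

import Mathlib

open Classical

noncomputable section

/-- Partial sums of the (0-indexed) sequence `k`: `nseq k i = k 0 + ⋯ + k (i-1)`;
so `nseq k i` is the paper's `n_i` for the sequence `(k_1, …, k_s) = (k 0, …, k (s-1))`. -/
def nseq (k : ℕ → ℕ) (i : ℕ) : ℕ := ∑ j ∈ Finset.range i, k j

/-- The set of terminal vertices `T_k = {(n_i, n - n_i) : 0 ≤ i ≤ s}` of the ladder diagram. -/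
def terminals (s : ℕ) (k : ℕ → ℕ) : Set (ℕ × ℕ) :=
  {v | ∃ i ≤ s, v = (nseq k i, nseq k s - nseq k i)}

/-- The vertex set of the ladder diagram `Γ_k`. -/
def ladderV (s : ℕ) (k : ℕ → ℕ) : Set (ℕ × ℕ) :=
  {v | ∃ t ∈ terminals s k, v.1 ≤ t.1 ∧ v.2 ≤ t.2}

/-- A unit grid step: one step to the right or one step up. -/
def gridStep (v w : ℕ × ℕ) : Prop :=
  w = (v.1 + 1, v.2) ∨ w = (v.1, v.2 + 1)

/-- The edge set of the ladder diagram `Γ_k`. -/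
def ladderE (s : ℕ) (k : ℕ → ℕ) : Set ((ℕ × ℕ) × (ℕ × ℕ)) :=
  {e | e.1 ∈ ladderV s k ∧ e.2 ∈ ladderV s k ∧ gridStep e.1 e.2}

/-- A combinatorial (directed) graph in the grid `ℤ_{≥0} × ℤ_{≥0}`,
given by a set of vertices and a set of edges. -/
@[ext] structure LGraph where
  V : Set (ℕ × ℕ)
  E : Set ((ℕ × ℕ) × (ℕ × ℕ))

/-- Subgraph inclusion order on grid graphs. -/
instance : PartialOrder LGraph where
  le γ γ' := γ.V ⊆ γ'.V ∧ γ.E ⊆ γ'.E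
  le_refl γ := ⟨subset_rfl, subset_rfl⟩
  le_trans a b c h h' := ⟨h.1.trans h'.1, h.2.trans h'.2⟩
  le_antisymm a b h h' := LGraph.ext (subset_antisymm h.1 h'.1) (subset_antisymm h.2 h'.2)

/-- The ladder diagram `Γ_k` as a grid graph. -/
def ladder (s : ℕ) (k : ℕ → ℕ) : LGraph :=
  ⟨ladderV s k, ladderE s k⟩

/-- A positive path: (the graph of) a shortest path in the ladder diagram `Γ_k`
from the origin `(0,0)` to a terminal vertex. -/
def IsPositivePath (s : ℕ) (k : ℕ → ℕ) (p : LGraph) : Prop :=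
  ∃ (m : ℕ) (f : ℕ → ℕ × ℕ),
    f 0 = (0, 0) ∧ f m ∈ terminals s k ∧
    (∀ i < m, gridStep (f i) (f (i + 1))) ∧
    (∀ i ≤ m, f i ∈ ladderV s k) ∧
    p.V = {v | ∃ i ≤ m, v = f i} ∧
    p.E = {e | ∃ i < m, e = (f i, f (i + 1))}

/-- A face of the ladder diagram `Γ_k`: a subgraph which contains all terminal
vertices and is a union of positive paths. -/
def IsLadderFace (s : ℕ) (k : ℕ → ℕ) (γ : LGraph) : Prop :=
  terminals s k ⊆ γ.V ∧
  ∃ P : Set LGraph, (∀ p ∈ P, IsPositivePath s k p) ∧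
    γ.V = ⋃ p ∈ P, LGraph.V p ∧ γ.E = ⋃ p ∈ P, LGraph.E p

/-- The dimension (first Betti number) of a face of a ladder diagram:
`|E(γ)| - |V(γ)| + 1`. -/
def ldim (γ : LGraph) : ℤ :=
  (γ.E.ncard : ℤ) - (γ.V.ncard : ℤ) + 1

/-- The index set `I = {(i,j) : i,j ≥ 1, i+j ≤ n}` of the coordinates of a
Gelfand–Cetlin pattern. -/
def GCIdx (n : ℕ) : Set (ℕ × ℕ) := {p | 1 ≤ p.1 ∧ 1 ≤ p.2 ∧ p.1 + p.2 ≤ n}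

/-- The entries of a Gelfand–Cetlin pattern `x`, extended by the boundary
condition `x_{i, n+1-i} = λ_i`. -/
def gcEntry (n : ℕ) (lam : ℕ → ℝ) (x : GCIdx n → ℝ) (p : ℕ × ℕ) : ℝ :=
  if h : p ∈ GCIdx n then x ⟨p, h⟩ else lam p.1

/-- The Gelfand–Cetlin polytope `P_λ`: the set of points `(x_{i,j})_{(i,j) ∈ I}`
with `x_{i,j+1} ≥ x_{i,j} ≥ x_{i+1,j}` for all `(i,j) ∈ I`, where
`x_{i,n+1-i} = λ_i`. -/
def GCPoly (n : ℕ) (lam : ℕ → ℝ) : Set (GCIdx n → ℝ) :=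
  {x | ∀ i j : ℕ, (i, j) ∈ GCIdx n →
    gcEntry n lam x (i, j) ≤ gcEntry n lam x (i, j + 1) ∧
    gcEntry n lam x (i + 1, j) ≤ gcEntry n lam x (i, j)}

/-- The subset of `P_λ` obtained by turning the inequalities
`x_{i,j+1} ≥ x_{i,j}` for `(i,j) ∈ SH` and `x_{i,j} ≥ x_{i+1,j}` for
`(i,j) ∈ SV` into equalities. -/
def GCFaceOf (n : ℕ) (lam : ℕ → ℝ) (SH SV : Set (ℕ × ℕ)) : Set (GCIdx n → ℝ) :=
  {x | x ∈ GCPoly n lam ∧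
    (∀ p ∈ SH, gcEntry n lam x (p.1, p.2 + 1) = gcEntry n lam x p) ∧
    (∀ p ∈ SV, gcEntry n lam x p = gcEntry n lam x (p.1 + 1, p.2))}

/-- A face of the GC polytope: a nonempty solution set of the system obtained
by replacing some of the defining inequalities by equalities. -/
def IsGCFace (n : ℕ) (lam : ℕ → ℝ) (F : Set (GCIdx n → ℝ)) : Prop :=
  F.Nonempty ∧ ∃ SH SV : Set (ℕ × ℕ), SH ⊆ GCIdx n ∧ SV ⊆ GCIdx n ∧
    F = GCFaceOf n lam SH SV

/-- The dimension of (a face of) the GC polytope: the dimension of its affine span. -/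
def GCdim (n : ℕ) (F : Set (GCIdx n → ℝ)) : ℕ :=
  Module.finrank ℝ (affineSpan ℝ F).direction

/-- `lam` (1-indexed) is weakly decreasing with block structure `k`: it is
constant on each block `(n_{i-1}, n_i]` and strictly decreases between
consecutive blocks. -/
def HasBlockStructure (s : ℕ) (k : ℕ → ℕ) (lam : ℕ → ℝ) : Prop :=
  (∀ i < s, ∀ a b : ℕ, nseq k i < a → a ≤ b → b ≤ nseq k (i + 1) → lam a = lam b) ∧
  (∀ i : ℕ, 1 ≤ i → i < s → lam (nseq k i + 1) < lam (nseq k i))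

/-- The edge set of the graph `φ(F)` associated to a subset `F` of the GC polytope. -/
def phiE (n : ℕ) (lam : ℕ → ℝ) (F : Set (GCIdx n → ℝ)) :
    Set ((ℕ × ℕ) × (ℕ × ℕ)) :=
  {e | (∃ i < n, e = ((0, i), (0, i + 1)) ∨ e = ((i, 0), (i + 1, 0))) ∨
    (∃ i j : ℕ, (i, j) ∈ GCIdx n ∧ e = ((i - 1, j), (i, j)) ∧
      ∃ x ∈ F, gcEntry n lam x (i, j) < gcEntry n lam x (i, j + 1)) ∨
    (∃ i j : ℕ, (i, j) ∈ GCIdx n ∧ e = ((i, j - 1), (i, j)) ∧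
      ∃ x ∈ F, gcEntry n lam x (i + 1, j) < gcEntry n lam x (i, j))}

/-- The graph `φ(F)`: its edges are given by `phiE` and its vertices are the
endpoints of its edges. -/
def phiGC (n : ℕ) (lam : ℕ → ℝ) (F : Set (GCIdx n → ℝ)) : LGraph where
  V := {v | ∃ e ∈ phiE n lam F, v = e.1 ∨ v = e.2}
  E := phiE n lam F

/-- The map `ψ`: for a subgraph `γ`, the set of points of `P_λ` where the
inequalities corresponding to the missing edges of `γ` become equalities. -/
def psiGC (n : ℕ) (lam : ℕ → ℝ) (γ : LGraph) : Set (GCIdx n → ℝ) :=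
  {x | x ∈ GCPoly n lam ∧ ∀ i j : ℕ, (i, j) ∈ GCIdx n →
    (((i - 1, j), (i, j)) ∉ γ.E → gcEntry n lam x (i, j) = gcEntry n lam x (i, j + 1)) ∧
    (((i, j - 1), (i, j)) ∉ γ.E → gcEntry n lam x (i, j) = gcEntry n lam x (i + 1, j))}
/-- The recursively defined point `x̄` of the proof of Lemma 2.6 (bijectivity):
`x̄_{i,j} = λ_i` if `i + j = n + 1`, and for `i + j ≤ n` it is determined from
`x̄_{i,j+1}` and `x̄_{i+1,j}` according to which of the two edges
`((i-1,j),(i,j))`, `((i,j-1),(i,j))` belong to `E`. -/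
def barX (n : ℕ) (lam : ℕ → ℝ) (E : Set ((ℕ × ℕ) × (ℕ × ℕ))) : ℕ → ℕ → ℝ
  | i, j =>
    if h1 : n + 1 ≤ i + j then lam i
    else if h2 : ((i - 1, j), (i, j)) ∈ E then
      if h3 : ((i, j - 1), (i, j)) ∈ E then
        (barX n lam E i (j + 1) + barX n lam E (i + 1) j) / 2
      else barX n lam E (i + 1) j
    else barX n lam E i (j + 1)
  termination_by i j => n + 1 - (i + j)
  decreasing_by all_goals omega

/-- `α, β : ℕ → ℕ` encode an element
`w = ((α_1,β_1),…,(α_{s-1},β_{s-1})) ∈ W_{s-1}`, with the conventions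
`α_0 = 0`, `β_0 = 1`, `α_s = 1`, `β_s = 0`. -/
def IsW (s : ℕ) (α β : ℕ → ℕ) : Prop :=
  (∀ i : ℕ, 1 ≤ i → i < s →
    (α i, β i) = (1, 0) ∨ (α i, β i) = (0, 1) ∨ (α i, β i) = (1, 1)) ∧
  α 0 = 0 ∧ β 0 = 1 ∧ α s = 1 ∧ β s = 0

/-- The edge set of the subgraph `g_w` of `Γ_k`: the horizontal edge into the
terminal vertex `v_i` when `α_i = 1` and the vertical edge into `v_i` when
`β_i = 1`. -/
def gwE (s : ℕ) (k α β : ℕ → ℕ) : Set ((ℕ × ℕ) × (ℕ × ℕ)) :=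
  {e | ∃ i ≤ s,
    (α i = 1 ∧
      e = ((nseq k i - 1, nseq k s - nseq k i), (nseq k i, nseq k s - nseq k i))) ∨
    (β i = 1 ∧
      e = ((nseq k i, nseq k s - nseq k i - 1), (nseq k i, nseq k s - nseq k i)))}

/-- The subgraph `g_w` of `Γ_k`. -/
def gwGraph (s : ℕ) (k α β : ℕ → ℕ) : LGraph where
  V := {v | ∃ e ∈ gwE s k α β, v = e.1 ∨ v = e.2}
  E := gwE s k α β

/-- The interleaved sequence `r_w(k) * w̃` of length `2s - 1` (0-indexed):
entry `2j` is `k''_{j+1} = k_{j+1} + 1 - α_{j+1} - β_j` and entry `2j + 1` is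
`w̃_{j+1} = α_{j+1} β_{j+1}`. -/
def rstar (s : ℕ) (k α β : ℕ → ℕ) (t : ℕ) : ℕ :=
  if t % 2 = 0 then k (t / 2) + 1 - α (t / 2 + 1) - β (t / 2)
  else α (t / 2 + 1) * β (t / 2 + 1)

/-- `α`-value of one of the three symbols `(1,0), (0,1), (1,1)`,
encoded as `0, 1, 2 : Fin 3` respectively. -/
def aW3 (c : Fin 3) : ℕ := if c = 1 then 0 else 1

/-- `β`-value of one of the three symbols `(1,0), (0,1), (1,1)`,
encoded as `0, 1, 2 : Fin 3` respectively. -/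
def bW3 (c : Fin 3) : ℕ := if c = 0 then 0 else 1

/-- The function `α` of the element of `W_{s-1}` encoded by
`c : Fin (s-1) → Fin 3` (with the conventions `α_0 = 0`, `α_s = 1`). -/
def alph (s : ℕ) (c : Fin (s - 1) → Fin 3) (i : ℕ) : ℕ :=
  if i = 0 then 0 else if h : i - 1 < s - 1 then aW3 (c ⟨i - 1, h⟩) else 1

/-- The function `β` of the element of `W_{s-1}` encoded by
`c : Fin (s-1) → Fin 3` (with the conventions `β_0 = 1`, `β_s = 0`). -/
def bet (s : ℕ) (c : Fin (s - 1) → Fin 3) (i : ℕ) : ℕ :=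
  if i = 0 then 1 else if h : i - 1 < s - 1 then bW3 (c ⟨i - 1, h⟩) else 0

/-- The interleaved sequence `r_w(k) * w̃` (of length `2s - 1`, 0-indexed) for
the element `w ∈ W_{s-1}` encoded by `c`. -/
def newk (s : ℕ) (c : Fin (s - 1) → Fin 3) (k : ℕ → ℕ) (t : ℕ) : ℕ :=
  if t % 2 = 0 then k (t / 2) + 1 - alph s c (t / 2 + 1) - bet s c (t / 2)
  else alph s c (t / 2 + 1) * bet s c (t / 2 + 1)

/-- `|w| = Σ_{i=1}^{s-1} α_i β_i` for the element `w ∈ W_{s-1}` encoded by `c`. -/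
def wsize (s : ℕ) (c : Fin (s - 1) → Fin 3) : ℕ :=
  ∑ j ∈ Finset.range (s - 1), alph s c (j + 1) * bet s c (j + 1)

/-- The subgraph `g_w` of `Γ_k` for the element `w ∈ W_{s-1}` encoded by `c`. -/
def gwGraph3 (s : ℕ) (k : ℕ → ℕ) (c : Fin (s - 1) → Fin 3) : LGraph :=
  gwGraph s k (alph s c) (bet s c)

/-- Union of two grid graphs (union of vertex sets and of edge sets). -/
def ugraph (γ δ : LGraph) : LGraph := ⟨γ.V ∪ δ.V, γ.E ∪ δ.E⟩

/-- The generating function `F_k(t) = Σ_{γ face of Γ_k} t^{dim γ}` of the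
`f`-vector of the ladder diagram `Γ_k`, as a formal power series in `t`:
the coefficient of `t^d` is the number of faces of `Γ_k` of dimension `d`. -/
def fpol (s : ℕ) (k : ℕ → ℕ) : PowerSeries ℤ :=
  PowerSeries.mk fun d =>
    (Set.ncard {γ : LGraph | IsLadderFace s k γ ∧ ldim γ = (d : ℤ)} : ℤ)

/-- The operator `Π_{i=1}^{s-1} (∂/∂x_i + ∂/∂x_{i+1} + t ∂/∂y_i)` applied to a
polynomial in the variables `x_1, x_2, … , y_1, y_2, …` (the variable `x_{i+1}`
is `Sum.inl i` and `y_{i+1}` is `Sum.inr i`) over `ℚ[t]`. -/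
def Lfold (s : ℕ) (f : MvPolynomial (ℕ ⊕ ℕ) (Polynomial ℚ)) :
    MvPolynomial (ℕ ⊕ ℕ) (Polynomial ℚ) :=
  (List.range (s - 1)).foldl
    (fun g i =>
      MvPolynomial.pderiv (Sum.inl i) g + MvPolynomial.pderiv (Sum.inl (i + 1)) g +
        (Polynomial.X : Polynomial ℚ) • MvPolynomial.pderiv (Sum.inr i) g) f

/-- The operator `D_w = Π_{i=1}^{s-1} (∂/∂x_i)^{1-α_i} (∂/∂x_{i+1})^{1-β_i}
(t ∂/∂y_i)^{α_i β_i}` for the element `w ∈ W_{s-1}` encoded by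
`c : Fin (s-1) → Fin 3` (`0 ↦ (1,0)`, `1 ↦ (0,1)`, `2 ↦ (1,1)`). -/
def DfoldC (s : ℕ) (c : Fin (s - 1) → Fin 3)
    (f : MvPolynomial (ℕ ⊕ ℕ) (Polynomial ℚ)) : MvPolynomial (ℕ ⊕ ℕ) (Polynomial ℚ) :=
  (List.finRange (s - 1)).foldl
    (fun g i =>
      if c i = 0 then MvPolynomial.pderiv (Sum.inl ((i : ℕ) + 1)) g
      else if c i = 1 then MvPolynomial.pderiv (Sum.inl (i : ℕ)) g
      else (Polynomial.X : Polynomial ℚ) • MvPolynomial.pderiv (Sum.inr (i : ℕ)) g) f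

/-- The operator `D_w` for the element `w ∈ W_{s-1}` encoded by `α, β : ℕ → ℕ`. -/
def DfoldW (s : ℕ) (α β : ℕ → ℕ)
    (f : MvPolynomial (ℕ ⊕ ℕ) (Polynomial ℚ)) : MvPolynomial (ℕ ⊕ ℕ) (Polynomial ℚ) :=
  (List.range (s - 1)).foldl
    (fun g j =>
      if α (j + 1) = 1 ∧ β (j + 1) = 1 then
        (Polynomial.X : Polynomial ℚ) • MvPolynomial.pderiv (Sum.inr j) g
      else if α (j + 1) = 1 then MvPolynomial.pderiv (Sum.inl (j + 1)) g
      else MvPolynomial.pderiv (Sum.inl j) g) f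

/-- Substitution of `0` for all the variables `y_j = Sum.inr j`. -/
def setYzero :
    MvPolynomial (ℕ ⊕ ℕ) (Polynomial ℚ) →ₐ[Polynomial ℚ] MvPolynomial (ℕ ⊕ ℕ) (Polynomial ℚ) :=
  MvPolynomial.aeval
    (Sum.elim (fun i => MvPolynomial.X (Sum.inl i)) fun _ => (0 : MvPolynomial (ℕ ⊕ ℕ) (Polynomial ℚ)))
end

/-!
By interlacing, `λ_{n+1-j} ≤ x_{i,j} ≤ λ_i` for every point `x` of the polytope. If the vertex
`(i, j)` lies outside the ladder diagram, then `i` and `n + 1 - j` belong to the same block, so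
`x_{i,j+1} ≤ λ_i = λ_{n+1-j} ≤ x_{i,j}` and similarly `x_{i,j} ≤ x_{i+1,j}`: neither inequality at
`(i, j)` is ever strict. Hence every edge of the graph ends at a vertex of the ladder diagram, and
the vertices of the ladder diagram form a lower set, so the edge also starts in it.
-/

section LadderDiagram

variable {s : ℕ} {k : ℕ → ℕ}

theorem nseq_mono (k : ℕ → ℕ) : Monotone (nseq k) :=
  (Finset.sum_mono_set k).comp Finset.range_mono

theorem exists_nseq_lt_le {i : ℕ} (hpos : 0 < i) (hle : i ≤ nseq k s) :
    ∃ r < s, nseq k r < i ∧ i ≤ nseq k (r + 1) := by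
  have hmem : i ∈ Set.Ioc (nseq k 0) (nseq k s) := ⟨by simpa [nseq] using hpos, hle⟩
  rw [← (nseq_mono k).biUnion_Ico_Ioc_map_succ] at hmem
  simpa [and_left_comm] using hmem

theorem isLowerSet_ladderV (s : ℕ) (k : ℕ → ℕ) : IsLowerSet (ladderV s k) :=
  fun _ _ hwv ⟨t, ht, hvt⟩ => ⟨t, ht, hwv.1.trans hvt.1, hwv.2.trans hvt.2⟩

theorem zero_mk_mem_ladderV {j : ℕ} (hj : j ≤ nseq k s) : (0, j) ∈ ladderV s k :=
  ⟨_, ⟨0, s.zero_le, rfl⟩, Nat.zero_le _, by simpa [nseq] using hj⟩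

theorem mk_zero_mem_ladderV {i : ℕ} (hi : i ≤ nseq k s) : (i, 0) ∈ ladderV s k :=
  ⟨_, ⟨s, le_rfl, rfl⟩, hi, Nat.zero_le _⟩

theorem gridStep.le {v w : ℕ × ℕ} (h : gridStep v w) : v ≤ w := by
  rcases h with rfl | rfl
  exacts [⟨Nat.le_succ _, le_rfl⟩, ⟨le_rfl, Nat.le_succ _⟩]

theorem gridStep.mem_ladderE {v w : ℕ × ℕ} (h : gridStep v w) (hw : w ∈ ladderV s k) :
    (v, w) ∈ ladderE s k :=
  ⟨isLowerSet_ladderV s k h.le hw, hw, h⟩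

end LadderDiagram

section GelfandCetlinPattern

variable {n i j : ℕ} {lam : ℕ → ℝ} {x : GCIdx n → ℝ}

theorem gcEntry_of_add_eq (h : i + j = n + 1) : gcEntry n lam x (i, j) = lam i :=
  dif_neg fun hij => by have := hij.2.2; lia

theorem gcEntry_mem_Icc (hx : x ∈ GCPoly n lam) (hi : 1 ≤ i) (hj : 1 ≤ j) (hij : i + j ≤ n + 1) :
    gcEntry n lam x (i, j) ∈ Set.Icc (lam (n + 1 - j)) (lam i) := by
  induction hm : n + 1 - (i + j) generalizing i j with
  | zero =>
    rw [gcEntry_of_add_eq (by lia), show n + 1 - j = i by lia]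
    exact Set.left_mem_Icc.2 le_rfl
  | succ m ih =>
    have interlace := hx i j ⟨hi, hj, by lia⟩
    have right := ih (i := i + 1) (j := j) (by lia) hj (by lia) (by lia)
    have above := ih (i := i) (j := j + 1) hi (by lia) (by lia) (by lia)
    exact ⟨right.1.trans interlace.2, interlace.1.trans above.2⟩

theorem gcEntry_snd_succ_le_of_lam_eq (hx : x ∈ GCPoly n lam) (hij : (i, j) ∈ GCIdx n)
    (hlam : lam i = lam (n + 1 - j)) :
    gcEntry n lam x (i, j + 1) ≤ gcEntry n lam x (i, j) := by
  obtain ⟨hi, hj, hsum⟩ : 1 ≤ i ∧ 1 ≤ j ∧ i + j ≤ n := hij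
  calc gcEntry n lam x (i, j + 1)
      ≤ lam i := (gcEntry_mem_Icc hx hi (by lia) (by lia)).2
    _ = lam (n + 1 - j) := hlam
    _ ≤ gcEntry n lam x (i, j) := (gcEntry_mem_Icc hx hi hj (by lia)).1

theorem gcEntry_le_fst_succ_of_lam_eq (hx : x ∈ GCPoly n lam) (hij : (i, j) ∈ GCIdx n)
    (hlam : lam i = lam (n + 1 - j)) :
    gcEntry n lam x (i, j) ≤ gcEntry n lam x (i + 1, j) := by
  obtain ⟨hi, hj, hsum⟩ : 1 ≤ i ∧ 1 ≤ j ∧ i + j ≤ n := hij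
  calc gcEntry n lam x (i, j)
      ≤ lam i := (gcEntry_mem_Icc hx hi hj (by lia)).2
    _ = lam (n + 1 - j) := hlam
    _ ≤ gcEntry n lam x (i + 1, j) := (gcEntry_mem_Icc hx (by lia) hj (by lia)).1

end GelfandCetlinPattern

theorem gridStep_of_mem_phiE {n : ℕ} {lam : ℕ → ℝ} {F : Set (GCIdx n → ℝ)}
    {e : (ℕ × ℕ) × (ℕ × ℕ)} (he : e ∈ phiE n lam F) : gridStep e.1 e.2 := by
  rcases he with ⟨i, -, rfl | rfl⟩ | ⟨i, j, ⟨hi, -, -⟩, rfl, -⟩ | ⟨i, j, ⟨-, hj, -⟩, rfl, -⟩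
  · exact .inr rfl
  · exact .inl rfl
  · exact .inl (by simp only [Nat.sub_add_cancel hi])
  · exact .inr (by simp only [Nat.sub_add_cancel hj])

section Blocks

variable {s : ℕ} {k : ℕ → ℕ} {lam : ℕ → ℝ}

/-- `lam` (1-indexed) is constant on each block `(n_r, n_{r+1}]`, `r < s`, of `k`; distinct blocks
may share a value, unlike in `HasBlockStructure`. -/
def IsConstantOnBlocks (s : ℕ) (k : ℕ → ℕ) (lam : ℕ → ℝ) : Prop :=
  ∀ r < s, ∀ a b : ℕ, nseq k r < a → a ≤ b → b ≤ nseq k (r + 1) → lam a = lam b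

theorem IsConstantOnBlocks.lam_eq_of_notMem_ladderV (hlam : IsConstantOnBlocks s k lam) {i j : ℕ}
    (hij : (i, j) ∈ GCIdx (nseq k s)) (hV : (i, j) ∉ ladderV s k) :
    lam i = lam (nseq k s + 1 - j) := by
  obtain ⟨hi, -, hsum⟩ : 1 ≤ i ∧ 1 ≤ j ∧ i + j ≤ nseq k s := hij
  obtain ⟨r, hr, hri, hir⟩ := exists_nseq_lt_le hi (by lia : i ≤ nseq k s)
  have hj : nseq k s - nseq k (r + 1) < j :=
    not_le.1 fun hj => hV ⟨_, ⟨r + 1, hr, rfl⟩, hir, hj⟩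
  exact hlam r hr i _ hri (by lia) (by lia)

theorem IsConstantOnBlocks.snd_mem_ladderV (hlam : IsConstantOnBlocks s k lam)
    {F : Set (GCIdx (nseq k s) → ℝ)} (hF : F ⊆ GCPoly (nseq k s) lam)
    {e : (ℕ × ℕ) × (ℕ × ℕ)} (he : e ∈ phiE (nseq k s) lam F) : e.2 ∈ ladderV s k := by
  rcases he with ⟨i, hi, rfl | rfl⟩ | ⟨i, j, hij, rfl, x, hx, hlt⟩ | ⟨i, j, hij, rfl, x, hx, hlt⟩
  · exact zero_mk_mem_ladderV hi
  · exact mk_zero_mem_ladderV hi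
  · by_contra hV
    exact hlt.not_ge <|
      gcEntry_snd_succ_le_of_lam_eq (hF hx) hij (hlam.lam_eq_of_notMem_ladderV hij hV)
  · by_contra hV
    exact hlt.not_ge <|
      gcEntry_le_fst_succ_of_lam_eq (hF hx) hij (hlam.lam_eq_of_notMem_ladderV hij hV)

theorem phiGC_subgraph_general (hlam : IsConstantOnBlocks s k lam)
    {F : Set (GCIdx (nseq k s) → ℝ)} (hF : F ⊆ GCPoly (nseq k s) lam) :
    (phiGC (nseq k s) lam F).E ⊆ ladderE s k ∧
    (phiGC (nseq k s) lam F).V ⊆ ladderV s k := by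
  have hE : phiE (nseq k s) lam F ⊆ ladderE s k := fun _ he =>
    (gridStep_of_mem_phiE he).mem_ladderE (hlam.snd_mem_ladderV hF he)
  refine ⟨hE, ?_⟩
  rintro _ ⟨e, he, rfl | rfl⟩
  exacts [(hE he).1, (hE he).2.1]

end Blocks

theorem IsGCFace.subset_GCPoly {n : ℕ} {lam : ℕ → ℝ} {F : Set (GCIdx n → ℝ)}
    (hF : IsGCFace n lam F) : F ⊆ GCPoly n lam := by
  obtain ⟨-, SH, SV, -, -, rfl⟩ := hF
  exact fun _ hx => hx.1

/-- Lemma 2.1. For any face `F` of the Gelfand–Cetlin polytope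
`P_λ`, the graph `φ(F)` is a subgraph of the ladder diagram `Γ_k`. -/
theorem phiGC_subgraph (s : ℕ) (hs : 1 ≤ s) (k : ℕ → ℕ) (hk : ∀ i < s, 0 < k i)
    (lam : ℕ → ℝ) (hlam : HasBlockStructure s k lam)
    (F : Set (GCIdx (nseq k s) → ℝ)) (hF : IsGCFace (nseq k s) lam F) :
    (phiGC (nseq k s) lam F).E ⊆ ladderE s k ∧
    (phiGC (nseq k s) lam F).V ⊆ ladderV s k :=
  phiGC_subgraph_general hlam.1 hF.subset_GCPoly
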